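/- arXiv:2403.03589 — 5 statements merged into one kernel-verified Lean document; each statement's English description precedes it below -/
import Mathlib

section
/- Let (𝒳, μ) be a measure space, let g : 𝒳 → [0,∞) be measurable, and let q, p : 𝒳 → [0,∞) be measurable probability densities with respect to μ (i.e., ∫ q dμ = 1 and ∫ p dμ = 1), with p(x) > 0 for μ-a.e. x in {q > 0}. If √g · q is μ-integrable, then ∫ g(x) q(x)²/p(x) dμ(x) ≥ (∫ √(g(x)) q(x) dμ(x))². -/
open MeasureTheory

/-!
Write `√g · q` as the product of `√g · q / √p` and `√p`, and apply the Cauchy–Schwarz inequality.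
-/

section WeightedCauchySchwarz

variable {α : Type*} [MeasurableSpace α] {μ : Measure α}

open scoped ENNReal

theorem sq_lintegral_le_lintegral_mul_lintegral_of_sq_le_mul {r u v : α → ℝ≥0∞}
    (hu : AEMeasurable u μ) (hv : AEMeasurable v μ) (hr : ∀ᵐ x ∂μ, r x ^ 2 ≤ u x * v x) :
    (∫⁻ x, r x ∂μ) ^ 2 ≤ (∫⁻ x, u x ∂μ) * ∫⁻ x, v x ∂μ := by
  have sq_le_iff (a b c : ℝ≥0∞) :
      a ^ 2 ≤ b * c ↔ a ≤ b ^ (1 / 2 : ℝ) * c ^ (1 / 2 : ℝ) := by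
    rw [← ENNReal.mul_rpow_of_nonneg _ _ (by norm_num), one_div,
      ENNReal.le_rpow_inv_iff two_pos, ENNReal.rpow_two]
  rw [sq_le_iff]
  calc ∫⁻ x, r x ∂μ
      ≤ ∫⁻ x, u x ^ (1 / 2 : ℝ) * v x ^ (1 / 2 : ℝ) ∂μ :=
        lintegral_mono_ae (hr.mono fun x hx ↦ (sq_le_iff _ _ _).1 hx)
    _ ≤ (∫⁻ x, u x ∂μ) ^ (1 / 2 : ℝ) * (∫⁻ x, v x ∂μ) ^ (1 / 2 : ℝ) :=
        ENNReal.lintegral_mul_norm_pow_le hu hv (by norm_num) (by norm_num) (by norm_num)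

theorem ofReal_sq_div_mul_ofReal {a b : ℝ} (hab : a ≠ 0 → 0 < b) :
    ENNReal.ofReal (a ^ 2 / b) * ENNReal.ofReal b = ‖a‖ₑ ^ 2 := by
  rcases eq_or_ne a 0 with rfl | ha
  · simp
  · have hb : 0 < b := hab ha
    rw [← ENNReal.ofReal_mul (by positivity), div_mul_cancel₀ _ hb.ne', ← enorm_pow,
      Real.enorm_of_nonneg (sq_nonneg a)]

theorem sq_lintegral_enorm_le_lintegral_sq_div_mul_lintegral {f p : α → ℝ}
    (hf : AEMeasurable f μ) (hp : AEMeasurable p μ) (hfp : ∀ᵐ x ∂μ, f x ≠ 0 → 0 < p x) :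
    (∫⁻ x, ‖f x‖ₑ ∂μ) ^ 2 ≤
      (∫⁻ x, ENNReal.ofReal (f x ^ 2 / p x) ∂μ) * ∫⁻ x, ENNReal.ofReal (p x) ∂μ :=
  sq_lintegral_le_lintegral_mul_lintegral_of_sq_le_mul
    ((hf.pow_const 2).div hp).ennreal_ofReal hp.ennreal_ofReal
    (hfp.mono fun _ hx ↦ (ofReal_sq_div_mul_ofReal hx).ge)

theorem sq_integral_le_lintegral_sq_div_mul_integral {f p : α → ℝ}
    (hf : Integrable f μ) (hp : Integrable p μ) (hp0 : 0 ≤ᵐ[μ] p)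
    (hfp : ∀ᵐ x ∂μ, f x ≠ 0 → 0 < p x) :
    ENNReal.ofReal ((∫ x, f x ∂μ) ^ 2) ≤
      (∫⁻ x, ENNReal.ofReal (f x ^ 2 / p x) ∂μ) * ENNReal.ofReal (∫ x, p x ∂μ) :=
  calc ENNReal.ofReal ((∫ x, f x ∂μ) ^ 2)
      = ‖∫ x, f x ∂μ‖ₑ ^ 2 := by rw [← enorm_pow, Real.enorm_of_nonneg (sq_nonneg _)]
    _ ≤ (∫⁻ x, ‖f x‖ₑ ∂μ) ^ 2 := by
        gcongr
        exact enorm_integral_le_lintegral_enorm f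
    _ ≤ (∫⁻ x, ENNReal.ofReal (f x ^ 2 / p x) ∂μ) * ∫⁻ x, ENNReal.ofReal (p x) ∂μ :=
        sq_lintegral_enorm_le_lintegral_sq_div_mul_lintegral hf.aemeasurable hp.aemeasurable hfp
    _ = (∫⁻ x, ENNReal.ofReal (f x ^ 2 / p x) ∂μ) * ENNReal.ofReal (∫ x, p x ∂μ) := by
        rw [ofReal_integral_eq_lintegral_ofReal hp hp0]

end WeightedCauchySchwarz

theorem covariate_density_lower_bound_general
    {𝒳 : Type*} [MeasurableSpace 𝒳] {μ : Measure 𝒳} {g q p : 𝒳 → ℝ}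
    (hg0 : 0 ≤ᵐ[μ] g) (hp0 : 0 ≤ᵐ[μ] p) (hpint : Integrable p μ)
    (hqp : ∀ᵐ x ∂μ, q x ≠ 0 → 0 < p x) (hsg : Integrable (fun x ↦ √(g x) * q x) μ) :
    ENNReal.ofReal ((∫ x, √(g x) * q x ∂μ) ^ 2) ≤
      (∫⁻ x, ENNReal.ofReal (g x * q x ^ 2 / p x) ∂μ) * ENNReal.ofReal (∫ x, p x ∂μ) := by
  have sq_sqrt_mul : ∀ᵐ x ∂μ, ENNReal.ofReal ((√(g x) * q x) ^ 2 / p x) =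
      ENNReal.ofReal (g x * q x ^ 2 / p x) :=
    hg0.mono fun x hx ↦ by rw [mul_pow, Real.sq_sqrt hx]
  rw [← lintegral_congr_ae sq_sqrt_mul]
  exact sq_integral_le_lintegral_sq_div_mul_integral hsg hpint hp0
    (hqp.mono fun _ hx hne ↦ hx (right_ne_zero_of_mul hne))

/-- Inequality half of the efficient covariate density theorem: for a nonnegative
measurable `g`, probability densities `q, p` with respect to `μ` with `p > 0` a.e. on
`{q > 0}`, if `√g · q` is integrable then
`∫ g q²/p dμ ≥ (∫ √g q dμ)²`. -/
theorem covariate_density_lower_bound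
    {𝒳 : Type*} [MeasurableSpace 𝒳] (μ : Measure 𝒳)
    (g q p : 𝒳 → ℝ)
    (hgm : Measurable g) (hg0 : ∀ x, 0 ≤ g x)
    (hqm : Measurable q) (hq0 : ∀ x, 0 ≤ q x)
    (hpm : Measurable p) (hp0 : ∀ x, 0 ≤ p x)
    (hqint : Integrable q μ) (hq1 : ∫ x, q x ∂μ = 1)
    (hpint : Integrable p μ) (hp1 : ∫ x, p x ∂μ = 1)
    (hppos : ∀ᵐ x ∂μ, 0 < q x → 0 < p x)
    (hsg : Integrable (fun x => Real.sqrt (g x) * q x) μ) :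
    ENNReal.ofReal ((∫ x, Real.sqrt (g x) * q x ∂μ) ^ 2) ≤
      ∫⁻ x, ENNReal.ofReal (g x * q x ^ 2 / p x) ∂μ := by
  simpa only [hp1, ENNReal.ofReal_one, mul_one] using
    covariate_density_lower_bound_general (.of_forall hg0) (.of_forall hp0) hpint
      (hppos.mono fun x hx hne ↦ hx ((hq0 x).lt_of_ne' hne)) hsg
end

section
/- Let (𝒳, μ) be a measure space, let g : 𝒳 → [0,∞) be measurable, and let q : 𝒳 → [0,∞) be a measurable probability density with respect to μ. Assume 0 < ∫ √(g) q dμ < ∞ and that g(x) > 0 for μ-a.e. x in {q > 0}. Define p*(x) = √(g(x)) q(x) / ∫ √(g) q dμ. Then p* is a probability density with respect to μ, and ∫ g(x) q(x)²/p*(x) dμ(x) = (∫ √(g(x)) q(x) dμ(x))², i.e., p* attains the lower bound (∫ √g q dμ)² of the functional p ↦ ∫ g q²/p dμ over probability densities. -/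
open MeasureTheory

-- Where `a = 0` or `c = 0`, both sides vanish by the convention `x / 0 = 0`.
theorem sq_div_div_eq_mul {G₀ : Type*} [CommGroupWithZero G₀] (a c : G₀) :
    a ^ 2 / (a / c) = c * a := by
  rw [div_div_eq_mul_div, mul_div_right_comm, sq, mul_self_div_self, mul_comm]

section NormalizedFunction

variable {α 𝕜 : Type*} [MeasurableSpace α] [RCLike 𝕜] {μ : Measure α}

theorem integral_div_integral_self {f : α → 𝕜} (hf : ∫ x, f x ∂μ ≠ 0) :
    ∫ x, f x / (∫ y, f y ∂μ) ∂μ = 1 := by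
  rw [integral_div, div_self hf]

theorem integral_sq_div_div_integral (f : α → 𝕜) :
    ∫ x, f x ^ 2 / (f x / ∫ y, f y ∂μ) ∂μ = (∫ x, f x ∂μ) ^ 2 := by
  simp_rw [sq_div_div_eq_mul, integral_const_mul, sq]

end NormalizedFunction

theorem efficient_covariate_density_attains_general
    {𝒳 : Type*} [MeasurableSpace 𝒳] {μ : Measure 𝒳} {g q : 𝒳 → ℝ}
    (hne : ∫ x, Real.sqrt (g x) * q x ∂μ ≠ 0)
    (hgpos : ∀ᵐ x ∂μ, q x ≠ 0 → 0 < g x) :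
    (∫ x, Real.sqrt (g x) * q x / (∫ y, Real.sqrt (g y) * q y ∂μ) ∂μ = 1) ∧
    ∫ x, g x * q x ^ 2 /
        (Real.sqrt (g x) * q x / (∫ y, Real.sqrt (g y) * q y ∂μ)) ∂μ =
      (∫ x, Real.sqrt (g x) * q x ∂μ) ^ 2 := by
  have mul_sq_eq : ∀ᵐ x ∂μ, g x * q x ^ 2 = (Real.sqrt (g x) * q x) ^ 2 := by
    filter_upwards [hgpos] with x hx
    rcases eq_or_ne (q x) 0 with hq | hq
    · simp [hq]
    · rw [mul_pow, Real.sq_sqrt (hx hq).le]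
  refine ⟨integral_div_integral_self hne, ?_⟩
  rw [← integral_sq_div_div_integral]
  refine integral_congr_ae ?_
  filter_upwards [mul_sq_eq] with x hx
  rw [hx]

/-- Attainment half of the efficient covariate density theorem: under
`0 < ∫ √g q dμ < ∞` and `g > 0` a.e. on `{q > 0}`, the density
`p*(x) = √(g x) q x / ∫ √g q dμ` is a probability density and attains the lower bound:
`∫ g q²/p* dμ = (∫ √g q dμ)²`. -/
theorem efficient_covariate_density_attains
    {𝒳 : Type*} [MeasurableSpace 𝒳] (μ : Measure 𝒳)
    (g q : 𝒳 → ℝ)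
    (hgm : Measurable g) (hg0 : ∀ x, 0 ≤ g x)
    (hqm : Measurable q) (hq0 : ∀ x, 0 ≤ q x)
    (hqint : Integrable q μ) (hq1 : ∫ x, q x ∂μ = 1)
    (hsgint : Integrable (fun x => Real.sqrt (g x) * q x) μ)
    (hpos : 0 < ∫ x, Real.sqrt (g x) * q x ∂μ)
    (hgpos : ∀ᵐ x ∂μ, 0 < q x → 0 < g x) :
    (∫ x, Real.sqrt (g x) * q x / (∫ y, Real.sqrt (g y) * q y ∂μ) ∂μ = 1) ∧
    ∫ x, g x * q x ^ 2 /
        (Real.sqrt (g x) * q x / (∫ y, Real.sqrt (g y) * q y ∂μ)) ∂μ =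
      (∫ x, Real.sqrt (g x) * q x ∂μ) ^ 2 := by
  refine efficient_covariate_density_attains_general hpos.ne' ?_
  exact hgpos.mono fun x hx hq => hx ((hq0 x).lt_of_ne' hq)
end

section
/- Let (𝒳, μ) be a measure space, let σ₁, σ₀ : 𝒳 → (0,∞) be measurable, and let q : 𝒳 → [0,∞) be a measurable probability density with respect to μ with (σ₁+σ₀)q μ-integrable. Then for every measurable w : 𝒳 → (0,1) and every measurable probability density p : 𝒳 → [0,∞) with p > 0 μ-a.e. on {q > 0}, it holds that ∫ (σ₁(x)²/w(x) + σ₀(x)²/(1−w(x))) · q(x)²/p(x) dμ(x) ≥ (∫ (σ₁(x)+σ₀(x)) q(x) dμ(x))². That is, the pair (w*, p*) with w*(x) = σ₁(x)/(σ₁(x)+σ₀(x)) and p*(x) ∝ (σ₁(x)+σ₀(x)) q(x) minimizes the semiparametric efficiency bound jointly over propensity scores and covariate densities. -/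
open MeasureTheory

/-!
Two applications of Cauchy–Schwarz. At each covariate, allocation probabilities summing to one give
`(∑ i, σᵢ)² ≤ ∑ i, σᵢ² / wᵢ`. Over the covariates, writing `f = √p · (f / √p)` for
`f = (∑ i, σᵢ) q` gives `(∫ f)² ≤ (∫ p) (∫ f² / p)`, where `∫ p = 1`.
-/

open scoped ENNReal

section CauchySchwarz

variable {α : Type*} [MeasurableSpace α] {μ : Measure α}

theorem sq_lintegral_le_lintegral_mul_lintegral_sq_div {f p : α → ℝ≥0∞}
    (hf : AEMeasurable f μ) (hp : AEMeasurable p μ)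
    (hp_zero : ∀ᵐ x ∂μ, p x = 0 → f x = 0) (hp_top : ∀ᵐ x ∂μ, p x ≠ ∞) :
    (∫⁻ x, f x ∂μ) ^ 2 ≤ (∫⁻ x, p x ∂μ) * ∫⁻ x, f x ^ 2 / p x ∂μ := by
  have sq_rpow_half (a : ℝ≥0∞) : (a ^ (1 / 2 : ℝ)) ^ 2 = a := by
    rw [← ENNReal.rpow_mul_natCast]
    norm_num
  have f_eq_mul : f =ᵐ[μ] fun x => p x ^ (1 / 2 : ℝ) * (f x ^ 2 / p x) ^ (1 / 2 : ℝ) := by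
    filter_upwards [hp_zero, hp_top] with x hx_zero hx_top
    have mul_div : p x * (f x ^ 2 / p x) = f x ^ 2 :=
      ENNReal.mul_div_cancel' (fun h => by simp [hx_zero h]) (fun h => absurd h hx_top)
    rw [← ENNReal.mul_rpow_of_nonneg _ _ (by norm_num), mul_div, ← ENNReal.rpow_natCast_mul]
    norm_num
  calc (∫⁻ x, f x ∂μ) ^ 2
      = (∫⁻ x, p x ^ (1 / 2 : ℝ) * (f x ^ 2 / p x) ^ (1 / 2 : ℝ) ∂μ) ^ 2 := by
        rw [lintegral_congr_ae f_eq_mul]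
    _ ≤ ((∫⁻ x, p x ∂μ) ^ (1 / 2 : ℝ) * (∫⁻ x, f x ^ 2 / p x ∂μ) ^ (1 / 2 : ℝ)) ^ 2 := by
        gcongr
        exact ENNReal.lintegral_mul_norm_pow_le hp ((hf.pow_const 2).div hp)
          (by norm_num) (by norm_num) (by norm_num)
    _ = (∫⁻ x, p x ∂μ) * ∫⁻ x, f x ^ 2 / p x ∂μ := by
        rw [mul_pow, sq_rpow_half, sq_rpow_half]

theorem ofReal_sq_integral_le_ofReal_integral_mul_lintegral_sq_div {f p : α → ℝ}
    (hf : Integrable f μ) (hp : Integrable p μ) (hp_nonneg : 0 ≤ᵐ[μ] p)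
    (hfp : ∀ᵐ x ∂μ, f x ≠ 0 → 0 < p x) :
    ENNReal.ofReal ((∫ x, f x ∂μ) ^ 2) ≤
      ENNReal.ofReal (∫ x, p x ∂μ) * ∫⁻ x, ENNReal.ofReal (f x ^ 2 / p x) ∂μ := by
  have ofReal_sq (a : ℝ) : ENNReal.ofReal (a ^ 2) = ‖a‖ₑ ^ 2 := by
    rw [← sq_abs, ENNReal.ofReal_pow (abs_nonneg a), ← Real.enorm_eq_ofReal_abs]
  have div_eq : ∀ᵐ x ∂μ, ‖f x‖ₑ ^ 2 / ENNReal.ofReal (p x) = ENNReal.ofReal (f x ^ 2 / p x) := by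
    filter_upwards [hfp] with x hx
    by_cases hfx : f x = 0
    · simp [hfx]
    · rw [ENNReal.ofReal_div_of_pos (hx hfx), ofReal_sq]
  have eq_zero_of_density : ∀ᵐ x ∂μ, ENNReal.ofReal (p x) = 0 → ‖f x‖ₑ = 0 := by
    filter_upwards [hfp] with x hx hpx
    by_contra hfx
    exact (hx (enorm_ne_zero.mp hfx)).not_ge (ENNReal.ofReal_eq_zero.mp hpx)
  calc ENNReal.ofReal ((∫ x, f x ∂μ) ^ 2)
      = ‖∫ x, f x ∂μ‖ₑ ^ 2 := ofReal_sq _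
    _ ≤ (∫⁻ x, ‖f x‖ₑ ∂μ) ^ 2 := by
        gcongr
        exact enorm_integral_le_lintegral_enorm f
    _ ≤ (∫⁻ x, ENNReal.ofReal (p x) ∂μ) * ∫⁻ x, ‖f x‖ₑ ^ 2 / ENNReal.ofReal (p x) ∂μ :=
        sq_lintegral_le_lintegral_mul_lintegral_sq_div hf.aestronglyMeasurable.enorm
          hp.aemeasurable.ennreal_ofReal eq_zero_of_density (by simp)
    _ = ENNReal.ofReal (∫ x, p x ∂μ) * ∫⁻ x, ENNReal.ofReal (f x ^ 2 / p x) ∂μ := by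
        rw [ofReal_integral_eq_lintegral_ofReal hp hp_nonneg, lintegral_congr_ae div_eq]

end CauchySchwarz

theorem sq_sum_le_sum_sq_div_of_sum_eq_one {ι R : Type*} [Semifield R] [LinearOrder R]
    [IsStrictOrderedRing R] [ExistsAddOfLE R] {s : Finset ι} (σ : ι → R) {w : ι → R}
    (hw_pos : ∀ i ∈ s, 0 < w i) (hw_sum : ∑ i ∈ s, w i = 1) :
    (∑ i ∈ s, σ i) ^ 2 ≤ ∑ i ∈ s, σ i ^ 2 / w i := by
  simpa only [hw_sum, div_one] using Finset.sq_sum_div_le_sum_sq_div s σ hw_pos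

theorem joint_minimization_lower_bound_general {ι 𝒳 : Type*} [Fintype ι] [MeasurableSpace 𝒳]
    {μ : Measure 𝒳} {σ w : ι → 𝒳 → ℝ} {q p : 𝒳 → ℝ}
    (hint : Integrable (fun x => (∑ i, σ i x) * q x) μ)
    (hw_pos : ∀ i x, 0 < w i x) (hw_sum : ∀ x, ∑ i, w i x = 1)
    (hp_nonneg : ∀ x, 0 ≤ p x) (hp_one : ∫ x, p x ∂μ = 1)
    (hqp : ∀ᵐ x ∂μ, q x ≠ 0 → 0 < p x) :
    ENNReal.ofReal ((∫ x, (∑ i, σ i x) * q x ∂μ) ^ 2) ≤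
      ∫⁻ x, ENNReal.ofReal ((∑ i, σ i x ^ 2 / w i x) * (q x ^ 2 / p x)) ∂μ := by
  have cauchy_schwarz := ofReal_sq_integral_le_ofReal_integral_mul_lintegral_sq_div hint
    (integrable_of_integral_eq_one hp_one) (.of_forall hp_nonneg)
    (hqp.mono fun x hx h => hx (right_ne_zero_of_mul h))
  rw [hp_one, ENNReal.ofReal_one, one_mul] at cauchy_schwarz
  refine cauchy_schwarz.trans (lintegral_mono fun x => ENNReal.ofReal_le_ofReal ?_)
  calc ((∑ i, σ i x) * q x) ^ 2 / p x
      = (∑ i, σ i x) ^ 2 * (q x ^ 2 / p x) := by ring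
    _ ≤ (∑ i, σ i x ^ 2 / w i x) * (q x ^ 2 / p x) :=
        mul_le_mul_of_nonneg_right
          (sq_sum_le_sum_sq_div_of_sum_eq_one _ (fun i _ => hw_pos i x) (hw_sum x))
          (div_nonneg (sq_nonneg _) (hp_nonneg x))

/-- Joint minimization of the semiparametric efficiency bound: for every measurable
propensity score `w : 𝒳 → (0,1)` and every probability density `p` with `p > 0` a.e. on
`{q > 0}`, `∫ (σ₁²/w + σ₀²/(1−w)) q²/p dμ ≥ (∫ (σ₁+σ₀) q dμ)²`. -/
theorem joint_minimization_lower_bound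
    {𝒳 : Type*} [MeasurableSpace 𝒳] (μ : Measure 𝒳)
    (σ₁ σ₀ q : 𝒳 → ℝ)
    (hσ₁m : Measurable σ₁) (hσ₀m : Measurable σ₀)
    (hσ₁ : ∀ x, 0 < σ₁ x) (hσ₀ : ∀ x, 0 < σ₀ x)
    (hqm : Measurable q) (hq0 : ∀ x, 0 ≤ q x)
    (hqint : Integrable q μ) (hq1 : ∫ x, q x ∂μ = 1)
    (hint : Integrable (fun x => (σ₁ x + σ₀ x) * q x) μ) :
    ∀ w : 𝒳 → ℝ, Measurable w → (∀ x, w x ∈ Set.Ioo (0 : ℝ) 1) →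
    ∀ p : 𝒳 → ℝ, Measurable p → (∀ x, 0 ≤ p x) → Integrable p μ →
      (∫ x, p x ∂μ = 1) → (∀ᵐ x ∂μ, 0 < q x → 0 < p x) →
      ENNReal.ofReal ((∫ x, (σ₁ x + σ₀ x) * q x ∂μ) ^ 2) ≤
        ∫⁻ x, ENNReal.ofReal
          ((σ₁ x ^ 2 / w x + σ₀ x ^ 2 / (1 - w x)) * (q x ^ 2 / p x)) ∂μ := by
  intro w _ hw p _ hp0 _ hp1 hpq
  simpa [Fin.sum_univ_two] using joint_minimization_lower_bound_general
    (σ := ![σ₁, σ₀]) (w := ![w, 1 - w]) (by simpa [Fin.sum_univ_two] using hint)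
    (by simpa [Fin.forall_fin_two, forall_and] using hw) (by simp [Fin.sum_univ_two]) hp0 hp1
    (hpq.mono fun x hx hqx => hx ((hq0 x).lt_of_ne' hqx))
end

section
/- Let Q and P be probability measures on a measurable space 𝒳 with densities q and p with respect to a common σ-finite measure μ, with p > 0 μ-a.e. on {q > 0} and q/p bounded P-a.e. Let X ∼ P; given X, let A ∈ {0,1} satisfy P(A=1|X) = w(1|X) and P(A=0|X) = w(0|X) = 1 − w(1|X), with c ≤ w(1|X) ≤ 1−c for a constant c ∈ (0,1/2); let Y(1), Y(0) be potential outcomes with E[Y(a)|X] = μ₀(a)(X), integrable, and conditionally mean-independent of A given X; let Y = 1[A=1]Y(1) + 1[A=0]Y(0). For any bounded measurable μ̂(1), μ̂(0) : 𝒳 → ℝ with μ₀(1), μ₀(0) Q-integrable, the AIPWIW score Ψ = (1[A=1](Y − μ̂(1)(X))/w(1|X) − 1[A=0](Y − μ̂(0)(X))/w(0|X)) · q(X)/p(X) + ∫(μ̂(1) − μ̂(0)) dQ satisfies E[Ψ] = ∫ (μ₀(1) − μ₀(0)) dQ = θ₀, i.e., the importance-weighted augmented inverse probability weighting score is an unbiased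 estimate of the average treatment effect over Q, provided μ₀(a)·(q/p) is P-integrable. -/
open MeasureTheory

/-!
Everything reduces to one arm at a time. Conditioning on `X` turns `1[A = a] Y` into `w(X) m(X)` and
`1[A = a]` into `w(X)`, so dividing by the propensity `w` cancels it and the weighted residual of
the arm has mean `∫ (m - mhat) r dP = ∫ (m - mhat) dQ`, where `r = dQ/dP`. Adding back `∫ mhat dQ`
removes the regression estimate `mhat`.

The outcome part of the residual is integrable because `r / w` is bounded. The part involving
`mhat` is integrable because `mhat` is so under `Q`: the measure `1[A = a] dPr` pushed forward along
`X` has density `w` with respect to the law of `X`.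
-/

section Density

variable {α : Type*} [MeasurableSpace α] {μ : Measure α}

lemma withDensity_ofReal_withDensity_ofReal_div {p q : α → ℝ} (hp : Measurable p)
    (hq : Measurable q) (hpos : ∀ᵐ x ∂μ, 0 < q x → 0 < p x) :
    (μ.withDensity fun x => ENNReal.ofReal (p x)).withDensity
        (fun x => ENNReal.ofReal (q x / p x)) =
      μ.withDensity fun x => ENNReal.ofReal (q x) := by
  rw [← withDensity_mul μ (by fun_prop) (by fun_prop)]
  refine withDensity_congr_ae ?_
  filter_upwards [hpos] with x hx
  rw [Pi.mul_apply]
  rcases lt_or_ge 0 (p x) with hpx | hpx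
  · rw [← ENNReal.ofReal_mul hpx.le, mul_div_cancel₀ _ hpx.ne']
  · have hqx : q x ≤ 0 := not_lt.mp fun hqx => hpx.not_gt (hx hqx)
    rw [ENNReal.ofReal_of_nonpos hpx, ENNReal.ofReal_of_nonpos hqx, zero_mul]

lemma integrable_withDensity_ofReal_iff {r f : α → ℝ} (hr : AEMeasurable r μ) (hr0 : 0 ≤ᵐ[μ] r) :
    Integrable f (μ.withDensity fun x => ENNReal.ofReal (r x)) ↔
      Integrable (fun x => f x * r x) μ := by
  rw [integrable_withDensity_iff_integrable_smul₀' (by fun_prop) (by simp)]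
  refine integrable_congr ?_
  filter_upwards [hr0] with x hx
  rw [ENNReal.toReal_ofReal hx, smul_eq_mul, mul_comm]

lemma integral_withDensity_ofReal {r f : α → ℝ} (hr : AEMeasurable r μ) (hr0 : 0 ≤ᵐ[μ] r) :
    ∫ x, f x ∂(μ.withDensity fun x => ENNReal.ofReal (r x)) = ∫ x, f x * r x ∂μ := by
  rw [integral_withDensity_eq_integral_toReal_smul₀ (by fun_prop) (by simp)]
  refine integral_congr_ae ?_
  filter_upwards [hr0] with x hx
  rw [ENNReal.toReal_ofReal hx, smul_eq_mul, mul_comm]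

end Density

section Conditioning

variable {𝒳 Ω : Type*} [MeasurableSpace 𝒳] {mΩ : MeasurableSpace Ω} {Pr : Measure Ω}
  {X : Ω → 𝒳} {Z : Ω → ℝ} {h g : 𝒳 → ℝ}

lemma condExp_mul_comp_ae_eq (hg : Measurable g) (hZ : Integrable Z Pr)
    (hZg : Integrable (fun ω => Z ω * g (X ω)) Pr)
    (hcond : Pr[Z | MeasurableSpace.comap X inferInstance] =ᵐ[Pr] fun ω => h (X ω)) :
    Pr[fun ω => Z ω * g (X ω) | MeasurableSpace.comap X inferInstance] =ᵐ[Pr]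
      fun ω => h (X ω) * g (X ω) := by
  have hgX : StronglyMeasurable[MeasurableSpace.comap X inferInstance] fun ω => g (X ω) :=
    (hg.comp (comap_measurable X)).stronglyMeasurable
  filter_upwards [condExp_mul_of_stronglyMeasurable_right hgX hZg hZ, hcond] with ω hpull hω
  rw [← hω]
  exact hpull

lemma integrable_mul_of_condExp_ae_eq_comp (hX : Measurable X) (hh : Measurable h)
    (hg : Measurable g) (hZ : Integrable Z Pr) (hZg : Integrable (fun ω => Z ω * g (X ω)) Pr)
    (hcond : Pr[Z | MeasurableSpace.comap X inferInstance] =ᵐ[Pr] fun ω => h (X ω)) :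
    Integrable (fun x => h x * g x) (Pr.map X) :=
  (integrable_map_measure (by fun_prop) hX.aemeasurable).2 <|
    integrable_condExp.congr (condExp_mul_comp_ae_eq hg hZ hZg hcond)

lemma integrable_withDensity_of_condExp_ae_eq_comp {r f : 𝒳 → ℝ} (hX : Measurable X)
    (hh : Measurable h) (hg : Measurable g) (hr : Measurable r) (hr0 : 0 ≤ r)
    (hZ : Integrable Z Pr) (hZg : Integrable (fun ω => Z ω * g (X ω)) Pr)
    (hcond : Pr[Z | MeasurableSpace.comap X inferInstance] =ᵐ[Pr] fun ω => h (X ω))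
    (hweight : (fun x => h x * g x) =ᵐ[Pr.map X] fun x => f x * r x) :
    Integrable f ((Pr.map X).withDensity fun x => ENNReal.ofReal (r x)) :=
  (integrable_withDensity_ofReal_iff hr.aemeasurable (.of_forall hr0)).2 <|
    (integrable_mul_of_condExp_ae_eq_comp hX hh hg hZ hZg hcond).congr hweight

variable [IsFiniteMeasure Pr]

lemma integral_mul_comp_of_condExp_ae_eq_comp (hX : Measurable X) (hh : Measurable h)
    (hg : Measurable g) (hZ : Integrable Z Pr) (hZg : Integrable (fun ω => Z ω * g (X ω)) Pr)
    (hcond : Pr[Z | MeasurableSpace.comap X inferInstance] =ᵐ[Pr] fun ω => h (X ω)) :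
    ∫ ω, Z ω * g (X ω) ∂Pr = ∫ x, h x * g x ∂(Pr.map X) := by
  rw [← integral_condExp hX.comap_le, integral_map hX.aemeasurable (by fun_prop)]
  exact integral_congr_ae (condExp_mul_comp_ae_eq hg hZ hZg hcond)

lemma map_withDensity_ofReal_of_condExp_ae_eq_comp (hX : Measurable X) (hh : Measurable h)
    (hZ : Integrable Z Pr) (hZ0 : 0 ≤ᵐ[Pr] Z)
    (hcond : Pr[Z | MeasurableSpace.comap X inferInstance] =ᵐ[Pr] fun ω => h (X ω)) :
    (Pr.withDensity fun ω => ENNReal.ofReal (Z ω)).map X =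
      (Pr.map X).withDensity fun x => ENNReal.ofReal (h x) := by
  have hhX : Integrable (fun ω => h (X ω)) Pr := integrable_condExp.congr hcond
  have hhX0 : 0 ≤ᵐ[Pr] fun ω => h (X ω) := (condExp_nonneg hZ0).trans_eq hcond
  ext B hB
  have hXB : MeasurableSet (X ⁻¹' B) := hX hB
  have hset : ∫ ω in X ⁻¹' B, Z ω ∂Pr = ∫ ω in X ⁻¹' B, h (X ω) ∂Pr := by
    rw [← setIntegral_condExp hX.comap_le hZ ⟨B, hB, rfl⟩]
    exact integral_congr_ae (ae_restrict_of_ae hcond)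
  rw [Measure.map_apply hX hB, withDensity_apply _ hXB, withDensity_apply _ hB,
    setLIntegral_map hB (by fun_prop) hX,
    ← ofReal_integral_eq_lintegral_ofReal hZ.integrableOn (ae_restrict_of_ae hZ0), hset,
    ofReal_integral_eq_lintegral_ofReal hhX.integrableOn (ae_restrict_of_ae hhX0)]

lemma integrable_mul_comp_iff_of_condExp_ae_eq_comp (hX : Measurable X) (hh : Measurable h)
    (hg : Measurable g) (hZ : Integrable Z Pr) (hZ0 : 0 ≤ᵐ[Pr] Z)
    (hcond : Pr[Z | MeasurableSpace.comap X inferInstance] =ᵐ[Pr] fun ω => h (X ω)) :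
    Integrable (fun ω => Z ω * g (X ω)) Pr ↔ Integrable (fun x => h x * g x) (Pr.map X) := by
  have hh0 : 0 ≤ᵐ[Pr.map X] h :=
    (ae_map_iff hX.aemeasurable (measurableSet_le measurable_const hh)).2 <|
      (condExp_nonneg hZ0).trans_eq hcond
  simp only [mul_comm (Z _), mul_comm (h _)]
  rw [← integrable_withDensity_ofReal_iff hh.aemeasurable hh0,
    ← map_withDensity_ofReal_of_condExp_ae_eq_comp hX hh hZ hZ0 hcond,
    integrable_map_measure hg.aestronglyMeasurable hX.aemeasurable,
    ← integrable_withDensity_ofReal_iff hZ.aemeasurable hZ0]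
  rfl

lemma integral_mul_comp_eq_integral_withDensity {r f : 𝒳 → ℝ} (hX : Measurable X)
    (hh : Measurable h) (hg : Measurable g) (hr : Measurable r) (hr0 : 0 ≤ r)
    (hZ : Integrable Z Pr) (hZg : Integrable (fun ω => Z ω * g (X ω)) Pr)
    (hcond : Pr[Z | MeasurableSpace.comap X inferInstance] =ᵐ[Pr] fun ω => h (X ω))
    (hweight : (fun x => h x * g x) =ᵐ[Pr.map X] fun x => f x * r x) :
    ∫ ω, Z ω * g (X ω) ∂Pr =
      ∫ x, f x ∂((Pr.map X).withDensity fun x => ENNReal.ofReal (r x)) := by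
  rw [integral_withDensity_ofReal hr.aemeasurable (.of_forall hr0),
    integral_mul_comp_of_condExp_ae_eq_comp hX hh hg hZ hZg hcond]
  exact integral_congr_ae hweight

end Conditioning

/-- One arm of a treatment: `I` is its indicator, `Z` the outcome observed on the arm (and `0` off
it), `w` the propensity score and `m` the regression of the outcome on the covariate `X` within the
arm. As only conditional means enter the argument, `I` may be any nonnegative variable, and `m` is
encoded by `E[Z | X] = w(X) m(X)`, which determines it since `w` is positive. -/
structure IsTreatmentArm {𝒳 Ω : Type*} [MeasurableSpace 𝒳] {mΩ : MeasurableSpace Ω}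
    (Pr : Measure Ω) (X : Ω → 𝒳) (I Z : Ω → ℝ) (w m : 𝒳 → ℝ) : Prop where
  measurable_covariate : Measurable X
  measurable_propensity : Measurable w
  measurable_regression : Measurable m
  propensity_pos : ∀ᵐ x ∂(Pr.map X), 0 < w x
  indicator_nonneg : 0 ≤ᵐ[Pr] I
  integrable_indicator : Integrable I Pr
  integrable_outcome : Integrable Z Pr
  condExp_indicator : Pr[I | MeasurableSpace.comap X inferInstance] =ᵐ[Pr] fun ω => w (X ω)
  condExp_outcome :
    Pr[Z | MeasurableSpace.comap X inferInstance] =ᵐ[Pr] fun ω => w (X ω) * m (X ω)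

namespace IsTreatmentArm

variable {𝒳 Ω : Type*} [MeasurableSpace 𝒳] {mΩ : MeasurableSpace Ω} {Pr : Measure Ω}
  {X : Ω → 𝒳} {I Z : Ω → ℝ} {w m mhat r : 𝒳 → ℝ} {K : ℝ}

lemma of_treatment {𝒯 : Type*} [MeasurableSpace 𝒯] [MeasurableSingletonClass 𝒯] [DecidableEq 𝒯]
    [IsFiniteMeasure Pr] {A : Ω → 𝒯} {a : 𝒯} {Y Ya : Ω → ℝ} (hX : Measurable X)
    (hA : Measurable A) (hYa_int : Integrable Ya Pr) (hY_eq : ∀ ω, A ω = a → Y ω = Ya ω)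
    (hw : Measurable w) (hm : Measurable m) (hwpos : ∀ᵐ x ∂(Pr.map X), 0 < w x)
    (hcondA : Pr[(fun ω => if A ω = a then (1 : ℝ) else 0) |
      MeasurableSpace.comap X inferInstance] =ᵐ[Pr] fun ω => w (X ω))
    (hcondYa : Pr[(fun ω => (if A ω = a then (1 : ℝ) else 0) * Ya ω) |
      MeasurableSpace.comap X inferInstance] =ᵐ[Pr] fun ω => w (X ω) * m (X ω)) :
    IsTreatmentArm Pr X (fun ω => if A ω = a then 1 else 0)
      (fun ω => (if A ω = a then 1 else 0) * Y ω) w m := by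
  have hIm : Measurable fun ω => if A ω = a then (1 : ℝ) else 0 :=
    .ite (hA (measurableSet_singleton a)) measurable_const measurable_const
  have hI1 : ∀ ω, ‖if A ω = a then (1 : ℝ) else 0‖ ≤ 1 := fun ω => by split_ifs <;> simp
  have hYYa : (fun ω => (if A ω = a then (1 : ℝ) else 0) * Y ω) =
      fun ω => (if A ω = a then (1 : ℝ) else 0) * Ya ω := by
    ext ω
    split_ifs with h
    · rw [hY_eq ω h]
    · simp only [zero_mul]
  refine
    { measurable_covariate := hX
      measurable_propensity := hw
      measurable_regression := hm
      propensity_pos := hwpos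
      indicator_nonneg := .of_forall fun ω => by dsimp only; split_ifs <;> simp
      integrable_indicator := .of_bound hIm.aestronglyMeasurable 1 (.of_forall hI1)
      integrable_outcome := ?_
      condExp_indicator := hcondA
      condExp_outcome := ?_ } <;> rw [hYYa]
  · exact hYa_int.bdd_mul hIm.aestronglyMeasurable (.of_forall hI1)
  · exact hcondYa

lemma propensity_mul_mul_div_ae_eq (h : IsTreatmentArm Pr X I Z w m) (f : 𝒳 → ℝ) :
    (fun x => w x * (f x * (r x / w x))) =ᵐ[Pr.map X] fun x => f x * r x := by
  filter_upwards [h.propensity_pos] with x hx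
  field_simp

lemma integrable_outcome_mul_div (h : IsTreatmentArm Pr X I Z w m) (hr : Measurable r)
    (hr0 : 0 ≤ r) (hK : ∀ᵐ x ∂(Pr.map X), r x / w x ≤ K) :
    Integrable (fun ω => Z ω * (r (X ω) / w (X ω))) Pr := by
  have hX := h.measurable_covariate
  have hw := h.measurable_propensity
  have hbound : ∀ᵐ x ∂(Pr.map X), ‖r x / w x‖ ≤ K := by
    filter_upwards [hK, h.propensity_pos] with x hxK hxw
    rwa [Real.norm_of_nonneg (div_nonneg (hr0 x) hxw.le)]
  exact h.integrable_outcome.mul_bdd ((hr.div hw).comp hX).aestronglyMeasurable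
    (ae_of_ae_map hX.aemeasurable hbound)

lemma integrable_regression (h : IsTreatmentArm Pr X I Z w m) (hr : Measurable r)
    (hr0 : 0 ≤ r) (hK : ∀ᵐ x ∂(Pr.map X), r x / w x ≤ K) :
    Integrable m ((Pr.map X).withDensity fun x => ENNReal.ofReal (r x)) :=
  integrable_withDensity_of_condExp_ae_eq_comp h.measurable_covariate
    (h.measurable_propensity.mul h.measurable_regression) (hr.div h.measurable_propensity) hr hr0
    h.integrable_outcome (h.integrable_outcome_mul_div hr hr0 hK) h.condExp_outcome
    (by simpa only [Pi.mul_apply, Pi.div_apply, mul_assoc] using h.propensity_mul_mul_div_ae_eq m)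

variable [IsFiniteMeasure Pr]

lemma integral_outcome_mul_div (h : IsTreatmentArm Pr X I Z w m) (hr : Measurable r)
    (hr0 : 0 ≤ r) (hK : ∀ᵐ x ∂(Pr.map X), r x / w x ≤ K) :
    ∫ ω, Z ω * (r (X ω) / w (X ω)) ∂Pr =
      ∫ x, m x ∂((Pr.map X).withDensity fun x => ENNReal.ofReal (r x)) :=
  integral_mul_comp_eq_integral_withDensity h.measurable_covariate
    (h.measurable_propensity.mul h.measurable_regression) (hr.div h.measurable_propensity) hr hr0
    h.integrable_outcome (h.integrable_outcome_mul_div hr hr0 hK) h.condExp_outcome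
    (by simpa only [Pi.mul_apply, Pi.div_apply, mul_assoc] using h.propensity_mul_mul_div_ae_eq m)

lemma integrable_indicator_mul_estimate_mul_div (h : IsTreatmentArm Pr X I Z w m)
    (hr : Measurable r) (hr0 : 0 ≤ r) (hmhat : Measurable mhat)
    (hmhatQ : Integrable mhat ((Pr.map X).withDensity fun x => ENNReal.ofReal (r x))) :
    Integrable (fun ω => I ω * (mhat (X ω) * (r (X ω) / w (X ω)))) Pr := by
  rw [integrable_withDensity_ofReal_iff hr.aemeasurable (.of_forall hr0)] at hmhatQ
  exact (integrable_mul_comp_iff_of_condExp_ae_eq_comp h.measurable_covariate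
    h.measurable_propensity (hmhat.mul (hr.div h.measurable_propensity)) h.integrable_indicator
    h.indicator_nonneg h.condExp_indicator).2
      (hmhatQ.congr (h.propensity_mul_mul_div_ae_eq mhat).symm)

lemma integral_indicator_mul_estimate_mul_div (h : IsTreatmentArm Pr X I Z w m)
    (hr : Measurable r) (hr0 : 0 ≤ r) (hmhat : Measurable mhat)
    (hmhatQ : Integrable mhat ((Pr.map X).withDensity fun x => ENNReal.ofReal (r x))) :
    ∫ ω, I ω * (mhat (X ω) * (r (X ω) / w (X ω))) ∂Pr =
      ∫ x, mhat x ∂((Pr.map X).withDensity fun x => ENNReal.ofReal (r x)) :=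
  integral_mul_comp_eq_integral_withDensity h.measurable_covariate h.measurable_propensity
    (hmhat.mul (hr.div h.measurable_propensity)) hr hr0 h.integrable_indicator
    (h.integrable_indicator_mul_estimate_mul_div hr hr0 hmhat hmhatQ) h.condExp_indicator
    (h.propensity_mul_mul_div_ae_eq mhat)

lemma integrable_residual (h : IsTreatmentArm Pr X I Z w m) (hr : Measurable r)
    (hr0 : 0 ≤ r) (hK : ∀ᵐ x ∂(Pr.map X), r x / w x ≤ K) (hmhat : Measurable mhat)
    (hmhatQ : Integrable mhat ((Pr.map X).withDensity fun x => ENNReal.ofReal (r x))) :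
    Integrable (fun ω => (Z ω - I ω * mhat (X ω)) / w (X ω) * r (X ω)) Pr := by
  refine ((h.integrable_outcome_mul_div hr hr0 hK).sub
    (h.integrable_indicator_mul_estimate_mul_div hr hr0 hmhat hmhatQ)).congr
      (.of_forall fun ω => ?_)
  simp only [Pi.sub_apply]
  ring

lemma integral_residual (h : IsTreatmentArm Pr X I Z w m) (hr : Measurable r)
    (hr0 : 0 ≤ r) (hK : ∀ᵐ x ∂(Pr.map X), r x / w x ≤ K) (hmhat : Measurable mhat)
    (hmhatQ : Integrable mhat ((Pr.map X).withDensity fun x => ENNReal.ofReal (r x))) :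
    ∫ ω, (Z ω - I ω * mhat (X ω)) / w (X ω) * r (X ω) ∂Pr =
      ∫ x, m x ∂((Pr.map X).withDensity fun x => ENNReal.ofReal (r x)) -
        ∫ x, mhat x ∂((Pr.map X).withDensity fun x => ENNReal.ofReal (r x)) := by
  rw [← h.integral_outcome_mul_div hr hr0 hK,
    ← h.integral_indicator_mul_estimate_mul_div hr hr0 hmhat hmhatQ,
    ← integral_sub (h.integrable_outcome_mul_div hr hr0 hK)
      (h.integrable_indicator_mul_estimate_mul_div hr hr0 hmhat hmhatQ)]
  congr with ω
  ring

end IsTreatmentArm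

theorem aipwiw_unbiased_general
    {𝒳 Ω 𝒯 : Type*} [MeasurableSpace 𝒳] {mΩ : MeasurableSpace Ω}
    [MeasurableSpace 𝒯] [MeasurableSingletonClass 𝒯] [DecidableEq 𝒯]
    {Pr : Measure Ω} [IsProbabilityMeasure Pr] {X : Ω → 𝒳} (hX : Measurable X)
    {Q : Measure 𝒳} {r : 𝒳 → ℝ} (hr : Measurable r) (hr0 : 0 ≤ r)
    (hQ : Q = (Pr.map X).withDensity fun x => ENNReal.ofReal (r x))
    {A : Ω → 𝒯} (hA : Measurable A) {a b : 𝒯} {Y Ya Yb : Ω → ℝ}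
    (hYa_int : Integrable Ya Pr) (hYb_int : Integrable Yb Pr)
    (hY_eq_a : ∀ ω, A ω = a → Y ω = Ya ω) (hY_eq_b : ∀ ω, A ω = b → Y ω = Yb ω)
    {wa wb ma mb : 𝒳 → ℝ} (hwa : Measurable wa) (hwb : Measurable wb)
    (hma : Measurable ma) (hmb : Measurable mb)
    (hwa_pos : ∀ᵐ x ∂(Pr.map X), 0 < wa x) (hwb_pos : ∀ᵐ x ∂(Pr.map X), 0 < wb x)
    {K : ℝ} (hKa : ∀ᵐ x ∂(Pr.map X), r x / wa x ≤ K) (hKb : ∀ᵐ x ∂(Pr.map X), r x / wb x ≤ K)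
    (hcondA_a : Pr[(fun ω => if A ω = a then (1 : ℝ) else 0) |
      MeasurableSpace.comap X inferInstance] =ᵐ[Pr] fun ω => wa (X ω))
    (hcondA_b : Pr[(fun ω => if A ω = b then (1 : ℝ) else 0) |
      MeasurableSpace.comap X inferInstance] =ᵐ[Pr] fun ω => wb (X ω))
    (hcondYa : Pr[(fun ω => (if A ω = a then (1 : ℝ) else 0) * Ya ω) |
      MeasurableSpace.comap X inferInstance] =ᵐ[Pr] fun ω => wa (X ω) * ma (X ω))
    (hcondYb : Pr[(fun ω => (if A ω = b then (1 : ℝ) else 0) * Yb ω) |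
      MeasurableSpace.comap X inferInstance] =ᵐ[Pr] fun ω => wb (X ω) * mb (X ω))
    {ma_hat mb_hat : 𝒳 → ℝ} (hma_hat : Measurable ma_hat) (hmb_hat : Measurable mb_hat)
    (hma_hatQ : Integrable ma_hat Q) (hmb_hatQ : Integrable mb_hat Q) :
    ∫ ω, (((if A ω = a then (1 : ℝ) else 0) * (Y ω - ma_hat (X ω)) / wa (X ω)
          - (if A ω = b then (1 : ℝ) else 0) * (Y ω - mb_hat (X ω)) / wb (X ω)) * r (X ω)
        + ∫ x, (ma_hat x - mb_hat x) ∂Q) ∂Pr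
      = ∫ x, (ma x - mb x) ∂Q := by
  have arm_a := IsTreatmentArm.of_treatment hX hA hYa_int hY_eq_a hwa hma hwa_pos hcondA_a hcondYa
  have arm_b := IsTreatmentArm.of_treatment hX hA hYb_int hY_eq_b hwb hmb hwb_pos hcondA_b hcondYb
  subst hQ
  have hres_a := arm_a.integrable_residual hr hr0 hKa hma_hat hma_hatQ
  have hres_b := arm_b.integrable_residual hr hr0 hKb hmb_hat hmb_hatQ
  simp only [mul_sub, sub_mul _ _ (r _)]
  rw [integral_add (f := fun ω => _ - _) (hres_a.sub hres_b) (integrable_const _),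
    integral_sub hres_a hres_b,
    arm_a.integral_residual hr hr0 hKa hma_hat hma_hatQ,
    arm_b.integral_residual hr hr0 hKb hmb_hat hmb_hatQ,
    integral_const, probReal_univ, one_smul, integral_sub hma_hatQ hmb_hatQ,
    integral_sub (arm_a.integrable_regression hr hr0 hKa)
      (arm_b.integrable_regression hr hr0 hKb)]
  ring

/-- Unbiasedness of the importance-weighted AIPW score: with target distribution `Q`
(density `q`) and sampling distribution `P` (density `p`), `X ∼ P`, propensity score
`w₁` bounded in `[c, 1−c]`, conditional means `μ₁, μ₀` of the potential outcomes
`Y₁, Y₀` given `X`, conditional mean-independence of the treatment indicator, bounded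
regression estimates `μh₁, μh₀` and bounded importance weight `q/p`, the AIPWIW score
has expectation `θ₀ = ∫ (μ₁ − μ₀) dQ`. -/
theorem aipwiw_unbiased
    {𝒳 : Type*} [MeasurableSpace 𝒳] (μ : Measure 𝒳) [SigmaFinite μ]
    (q p : 𝒳 → ℝ) (hqm : Measurable q) (hq0 : ∀ x, 0 ≤ q x)
    (hpm : Measurable p) (hp0 : ∀ x, 0 ≤ p x)
    (Q P : Measure 𝒳)
    (hQ : Q = μ.withDensity fun x => ENNReal.ofReal (q x))
    (hP : P = μ.withDensity fun x => ENNReal.ofReal (p x))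
    [IsProbabilityMeasure Q] [IsProbabilityMeasure P]
    (hppos : ∀ᵐ x ∂μ, 0 < q x → 0 < p x)
    (M : ℝ) (hM : ∀ᵐ x ∂P, q x / p x ≤ M)
    {Ω : Type*} {mΩ : MeasurableSpace Ω} (Pr : Measure Ω) [IsProbabilityMeasure Pr]
    (X : Ω → 𝒳) (hX : Measurable X) (hXlaw : Measure.map X Pr = P)
    (A : Ω → ℝ) (hA : Measurable A) (hA01 : ∀ ω, A ω = 0 ∨ A ω = 1)
    (Y₁ Y₀ : Ω → ℝ) (hY₁ : Integrable Y₁ Pr) (hY₀ : Integrable Y₀ Pr)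
    (w₁ : 𝒳 → ℝ) (hw₁ : Measurable w₁)
    (c : ℝ) (hc : 0 < c) (hc2 : c < 1 / 2) (hwc : ∀ x, c ≤ w₁ x ∧ w₁ x ≤ 1 - c)
    (μ₁ μ₀ : 𝒳 → ℝ) (hμ₁m : Measurable μ₁) (hμ₀m : Measurable μ₀)
    (hcondA1 : Pr[(fun ω => if A ω = 1 then (1 : ℝ) else 0) |
        MeasurableSpace.comap X inferInstance] =ᵐ[Pr] fun ω => w₁ (X ω))
    (hcondA0 : Pr[(fun ω => if A ω = 0 then (1 : ℝ) else 0) |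
        MeasurableSpace.comap X inferInstance] =ᵐ[Pr] fun ω => 1 - w₁ (X ω))
    (hcondY1 : Pr[Y₁ | MeasurableSpace.comap X inferInstance] =ᵐ[Pr] fun ω => μ₁ (X ω))
    (hcondY0 : Pr[Y₀ | MeasurableSpace.comap X inferInstance] =ᵐ[Pr] fun ω => μ₀ (X ω))
    (hci1 : Pr[(fun ω => (if A ω = 1 then (1 : ℝ) else 0) * Y₁ ω) |
        MeasurableSpace.comap X inferInstance] =ᵐ[Pr] fun ω => w₁ (X ω) * μ₁ (X ω))
    (hci0 : Pr[(fun ω => (if A ω = 0 then (1 : ℝ) else 0) * Y₀ ω) |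
        MeasurableSpace.comap X inferInstance] =ᵐ[Pr]
        fun ω => (1 - w₁ (X ω)) * μ₀ (X ω))
    (Y : Ω → ℝ)
    (hYdef : ∀ ω, Y ω = (if A ω = 1 then (1 : ℝ) else 0) * Y₁ ω
        + (if A ω = 0 then (1 : ℝ) else 0) * Y₀ ω)
    (μh₁ μh₀ : 𝒳 → ℝ) (hμh₁m : Measurable μh₁) (hμh₀m : Measurable μh₀)
    (C : ℝ) (hμh₁b : ∀ x, |μh₁ x| ≤ C) (hμh₀b : ∀ x, |μh₀ x| ≤ C)
    (hμ₁Q : Integrable μ₁ Q) (hμ₀Q : Integrable μ₀ Q)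
    (hμ₁P : Integrable (fun x => μ₁ x * (q x / p x)) P)
    (hμ₀P : Integrable (fun x => μ₀ x * (q x / p x)) P) :
    ∫ ω, (((if A ω = 1 then (1 : ℝ) else 0) * (Y ω - μh₁ (X ω)) / w₁ (X ω)
          - (if A ω = 0 then (1 : ℝ) else 0) * (Y ω - μh₀ (X ω)) / (1 - w₁ (X ω)))
            * (q (X ω) / p (X ω))
        + ∫ x, (μh₁ x - μh₀ x) ∂Q) ∂Pr
      = ∫ x, (μ₁ x - μ₀ x) ∂Q := by
  subst hXlaw
  have hQP : Q = (Pr.map X).withDensity fun x => ENNReal.ofReal (q x / p x) := by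
    rw [hP, hQ, withDensity_ofReal_withDensity_ofReal_div hpm hqm hppos]
  have hr0 : ∀ x, 0 ≤ q x / p x := fun x => div_nonneg (hq0 x) (hp0 x)
  have hbound {w : 𝒳 → ℝ} (hw : ∀ x, c ≤ w x) : ∀ᵐ x ∂(Pr.map X), q x / p x / w x ≤ M / c :=
    hM.mono fun x hx => div_le_div₀ ((hr0 x).trans hx) hx hc (hw x)
  have hw₀c : ∀ x, c ≤ 1 - w₁ x := fun x => le_sub_comm.mp (hwc x).2
  exact aipwiw_unbiased_general hX (hqm.div hpm) hr0 hQP hA hY₁ hY₀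
    (fun ω h => by simp [hYdef, h]) (fun ω h => by simp [hYdef, h])
    hw₁ (hw₁.const_sub 1) hμ₁m hμ₀m
    (.of_forall fun x => hc.trans_le (hwc x).1) (.of_forall fun x => hc.trans_le (hw₀c x))
    (hbound fun x => (hwc x).1) (hbound hw₀c) hcondA1 hcondA0 hci1 hci0 hμh₁m hμh₀m
    (.of_bound hμh₁m.aestronglyMeasurable C (.of_forall hμh₁b))
    (.of_bound hμh₀m.aestronglyMeasurable C (.of_forall hμh₀b))
end

section
/- Let (Y_t, A_t, X_t), t = 1,…,T, be i.i.d. with X_t ∼ P (density p), A_t | X_t Bernoulli with propensity score w(1|X_t) ∈ [c, 1−c], and potential outcomes with conditional means μ₀(a)(X_t) and variances σ₀²(a)(X_t) conditionally independent of A_t given X_t; let X̃_s, s = 1,…,S, be i.i.d. with X̃_s ∼ Q (density q), independent of the first sample. Assume q/p bounded and all relevant second moments finite, and let θ₀(x) = μ₀(1)(x) − μ₀(0)(x) and θ₀ = E_{X̃∼Q}[θ₀(X̃)]. Then the efficient influence function ψ = (1/T) Σ_{t=1}^T (1[A_t=1](Y_t − μ₀(1)(X_t))/w(1|X_t) − 1[A_t=0](Y_t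 − μ₀(0)(X_t))/w(0|X_t)) · q(X_t)/p(X_t) + (1/S) Σ_{s=1}^S (θ₀(X̃_s) − θ₀) has mean zero and variance Var(ψ) = (1/T) · E_{X∼P}[(σ₀²(1)(X)/w(1|X) + σ₀²(0)(X)/w(0|X)) · q(X)²/p(X)²] + (1/S) · Var_{X̃∼Q}(θ₀(X̃)). Consequently T·Var(ψ) converges to the semiparametric efficiency bound τ(w,p) as S → ∞ (for fixed T). -/
open MeasureTheory ProbabilityTheory

/-!
Conditionally on the covariate, each inverse-propensity-weighted residual has mean zero, and its
second moment is the outcome variance divided by the propensity, times the squared density ratio.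
Since a unit is treated in one arm only, the two arms never contribute to the same score, so the
cross term of the squared score vanishes and the second moments add. Independence then turns
`Var ψ` into a weighted sum of variances, and the limit is identified by importance weighting:
`E_Q[g] = E_P[(q / p) g]`.
-/

universe u

section IndependentSums

variable {Ω ι κ : Type*} {mΩ : MeasurableSpace Ω} {Pr : Measure Ω}

lemma iIndepFun_sumElim_comp {α β : Type u} {γ : Type*} {mα : MeasurableSpace α}
    {mβ : MeasurableSpace β} {mγ : MeasurableSpace γ} {f : ι → Ω → α} {g : κ → Ω → β}
    {φ : α → γ} {χ : β → γ}
    (hindep : iIndepFun (β := fun i : ι ⊕ κ => Sum.elim (fun _ => α) (fun _ => β) i)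
      (m := fun i => Sum.rec (fun _ => mα) (fun _ => mβ) i)
      (fun i => Sum.rec (fun t => f t) (fun s => g s) i) Pr)
    (hφ : Measurable φ) (hχ : Measurable χ) :
    iIndepFun (Sum.elim (fun t ω => φ (f t ω)) fun s ω => χ (g s ω)) Pr := by
  have hcomp := hindep.comp (γ := fun _ => γ) (mγ := fun _ => mγ)
    (fun i => Sum.rec (fun _ => φ) (fun _ => χ) i) (Sum.rec (fun _ => hφ) fun _ => hχ)
  convert hcomp using 1
  funext i
  cases i <;> rfl

lemma variance_sum_const_mul [Fintype ι] {U : ι → Ω → ℝ} (a : ι → ℝ)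
    (hU : ∀ i, MemLp (U i) 2 Pr) (hindep : Pairwise fun i j => U i ⟂ᵢ[Pr] U j) :
    variance (fun ω => ∑ i, a i * U i ω) Pr = ∑ i, a i ^ 2 * variance (U i) Pr := by
  have hpair : Pairwise fun i j => (fun ω => a i * U i ω) ⟂ᵢ[Pr] fun ω => a j * U j ω :=
    fun i j hij => (hindep hij).comp (measurable_const_mul (a i)) (measurable_const_mul (a j))
  calc variance (fun ω => ∑ i, a i * U i ω) Pr
      = variance (∑ i, fun ω => a i * U i ω) Pr := by simp only [← Finset.sum_fn]
    _ = ∑ i, variance (fun ω => a i * U i ω) Pr :=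
        IndepFun.variance_sum (fun i _ => (hU i).const_mul (a i)) (hpair.set_pairwise _)
    _ = ∑ i, a i ^ 2 * variance (U i) Pr := by simp only [variance_const_mul]

variable [Fintype ι] [Fintype κ] {U : ι → Ω → ℝ} {V : κ → Ω → ℝ}

lemma integral_mul_sum_add_mul_sum_eq_zero (a b : ℝ)
    (hU : ∀ i, Integrable (U i) Pr) (hV : ∀ j, Integrable (V j) Pr)
    (hU0 : ∀ i, ∫ ω, U i ω ∂Pr = 0) (hV0 : ∀ j, ∫ ω, V j ω ∂Pr = 0) :
    ∫ ω, (a * ∑ i, U i ω + b * ∑ j, V j ω) ∂Pr = 0 := by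
  rw [integral_add ((integrable_finsetSum _ fun i _ => hU i).const_mul a)
      ((integrable_finsetSum _ fun j _ => hV j).const_mul b),
    integral_const_mul, integral_const_mul, integral_finsetSum _ fun i _ => hU i,
    integral_finsetSum _ fun j _ => hV j]
  simp only [hU0, hV0, Finset.sum_const_zero, mul_zero, add_zero]

lemma variance_average_add_average {u v : ℝ}
    (hU : ∀ i, MemLp (U i) 2 Pr) (hV : ∀ j, MemLp (V j) 2 Pr)
    (hindep : iIndepFun (Sum.elim U V) Pr)
    (hu : ∀ i, variance (U i) Pr = u) (hv : ∀ j, variance (V j) Pr = v) :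
    variance (fun ω => 1 / (Fintype.card ι : ℝ) * ∑ i, U i ω
      + 1 / (Fintype.card κ : ℝ) * ∑ j, V j ω) Pr
      = 1 / (Fintype.card ι : ℝ) * u + 1 / (Fintype.card κ : ℝ) * v := by
  have hvar := variance_sum_const_mul
    (Sum.elim (fun _ : ι => 1 / (Fintype.card ι : ℝ)) fun _ : κ => 1 / (Fintype.card κ : ℝ))
    (Sum.rec hU hV) fun _ _ hij => hindep.indepFun hij
  have hcard (n : ℕ) : (1 / (n : ℝ)) ^ 2 * n = 1 / n := by
    rcases eq_or_ne (n : ℝ) 0 with h | h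
    · simp [h]
    · field_simp
  simpa only [Fintype.sum_sum_type, Sum.elim_inl, Sum.elim_inr, hu, hv, ← Finset.mul_sum,
    Finset.sum_const, Finset.card_univ, nsmul_eq_mul, ← mul_assoc, hcard] using hvar

end IndependentSums

section CenteredTransform

variable {𝒳 Ω : Type*} [MeasurableSpace 𝒳] {mΩ : MeasurableSpace Ω} {Pr : Measure Ω}
  {Q : Measure 𝒳} {X : Ω → 𝒳} {f : 𝒳 → ℝ}

lemma memLp_comp_sub_const [IsFiniteMeasure Pr] {r : ENNReal} (hX : HasLaw X Q Pr)
    (hf : MemLp f r Q) (a : ℝ) : MemLp (fun ω => f (X ω) - a) r Pr :=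
  ((hX.map_eq ▸ hf).comp_of_map hX.aemeasurable).sub (memLp_const a)

variable [IsProbabilityMeasure Pr]

lemma integral_comp_sub_integral_eq_zero (hX : HasLaw X Q Pr) (hf : Integrable f Q) :
    ∫ ω, (f (X ω) - ∫ x, f x ∂Q) ∂Pr = 0 := by
  have hfX : Integrable (fun ω => f (X ω)) Pr := (hX.map_eq ▸ hf).comp_aemeasurable hX.aemeasurable
  have hmean : ∫ ω, f (X ω) ∂Pr = ∫ x, f x ∂Q := hX.integral_comp hf.aestronglyMeasurable
  rw [integral_sub hfX (integrable_const _), hmean, integral_const, probReal_univ, one_smul,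
    sub_self]

lemma variance_comp_sub_const (hX : HasLaw X Q Pr) (hf : AEStronglyMeasurable f Q) (a : ℝ) :
    variance (fun ω => f (X ω) - a) Pr = variance f Q := by
  rw [← hX.map_eq] at hf ⊢
  rw [variance_sub_const (X := fun ω => f (X ω)) (hf.comp_aemeasurable hX.aemeasurable),
    variance_map hf.aemeasurable hX.aemeasurable, Function.comp_def]

end CenteredTransform

lemma integral_withDensity_ofReal_eq_integral_div_smul {𝒳 E : Type*} [MeasurableSpace 𝒳]
    [NormedAddCommGroup E] [NormedSpace ℝ E] {μ : Measure 𝒳} {q p : 𝒳 → ℝ}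
    (hq : Measurable q) (hq0 : ∀ x, 0 ≤ q x) (hp : Measurable p) (hp0 : ∀ x, 0 ≤ p x)
    (hpq : ∀ᵐ x ∂μ, 0 < q x → 0 < p x) (g : 𝒳 → E) :
    ∫ x, g x ∂(μ.withDensity fun x => ENNReal.ofReal (q x))
      = ∫ x, (q x / p x) • g x ∂(μ.withDensity fun x => ENNReal.ofReal (p x)) := by
  rw [integral_withDensity_eq_integral_toReal_smul hq.ennreal_ofReal (by simp),
    integral_withDensity_eq_integral_toReal_smul hp.ennreal_ofReal (by simp)]
  refine integral_congr_ae ?_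
  filter_upwards [hpq] with x hx
  have hqp : p x = 0 → q x = 0 := fun hpx =>
    le_antisymm (not_lt.1 fun hqx => (hx hqx).ne' hpx) (hq0 x)
  rw [ENNReal.toReal_ofReal (hq0 x), ENNReal.toReal_ofReal (hp0 x), smul_smul,
    mul_div_cancel_of_imp' hqp]

lemma integral_mul_div_withDensity_ofReal_eq_integral_mul_div_sq {𝒳 : Type*} [MeasurableSpace 𝒳]
    {μ : Measure 𝒳} {q p : 𝒳 → ℝ} (hq : Measurable q) (hq0 : ∀ x, 0 ≤ q x) (hp : Measurable p)
    (hp0 : ∀ x, 0 ≤ p x) (hpq : ∀ᵐ x ∂μ, 0 < q x → 0 < p x) (f : 𝒳 → ℝ) :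
    ∫ x, f x * (q x / p x) ∂(μ.withDensity fun x => ENNReal.ofReal (q x))
      = ∫ x, f x * (q x / p x) ^ 2 ∂(μ.withDensity fun x => ENNReal.ofReal (p x)) := by
  rw [integral_withDensity_ofReal_eq_integral_div_smul hq hq0 hp hp0 hpq]
  congr with x
  rw [smul_eq_mul]
  ring

lemma tendsto_mul_one_div_mul_add_one_div_mul {n : ℝ} (hn : n ≠ 0) (a b : ℝ) :
    Filter.Tendsto (fun k : ℕ => n * (1 / n * a + 1 / (k : ℝ) * b)) Filter.atTop (nhds a) := by
  have hlim := (((tendsto_one_div_atTop_nhds_zero_nat (𝕜 := ℝ)).mul_const b).const_add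
    (1 / n * a)).const_mul n
  rwa [zero_mul, add_zero, ← mul_assoc, mul_one_div_cancel hn, one_mul] at hlim

section Weighting

variable {𝒳 Ω : Type*} {mΩ : MeasurableSpace Ω} {Pr : Measure Ω}

lemma condExp_comp_mul_ae_eq [MeasurableSpace 𝒳] {X : Ω → 𝒳} {Z : Ω → ℝ} {h g : 𝒳 → ℝ}
    (hh : Measurable h) (hZ : Integrable Z Pr) (hhZ : Integrable (fun ω => h (X ω) * Z ω) Pr)
    (hg : Pr[Z | MeasurableSpace.comap X inferInstance] =ᵐ[Pr] fun ω => g (X ω)) :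
    Pr[fun ω => h (X ω) * Z ω | MeasurableSpace.comap X inferInstance]
      =ᵐ[Pr] fun ω => h (X ω) * g (X ω) :=
  (condExp_mul_of_stronglyMeasurable_left
    (hh.comp (comap_measurable X)).stronglyMeasurable hhZ hZ).trans
    (hg.mono fun ω hω => congrArg (h (X ω) * ·) hω)

lemma memLp_div_of_le {r : ENNReal} {f g : Ω → ℝ} {c : ℝ} (hf : MemLp f r Pr)
    (hg : AEMeasurable g Pr) (hc : 0 < c) (hcg : ∀ ω, c ≤ g ω) :
    MemLp (fun ω => f ω / g ω) r Pr := by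
  refine hf.of_le_mul (c := c⁻¹) (hf.aestronglyMeasurable.div₀ hg.aestronglyMeasurable)
    (.of_forall fun ω => ?_)
  rw [norm_div, div_eq_inv_mul, Real.norm_of_nonneg (hc.le.trans (hcg ω))]
  gcongr
  exact hcg ω

lemma memLp_ite_one_zero_mul {r : ENNReal} {p : Ω → Prop} [DecidablePred p] {f : Ω → ℝ}
    (hp : MeasurableSet {ω | p ω}) (hf : MemLp f r Pr) :
    MemLp (fun ω => (if p ω then (1 : ℝ) else 0) * f ω) r Pr := by
  refine (hf.indicator hp).ae_eq (.of_forall fun ω => ?_)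
  by_cases hω : p ω <;> simp [hω]

end Weighting

section IPWResidual

variable {𝒳 𝒜 Ω : Type*} [DecidableEq 𝒜]

/-- The inverse-propensity-weighted residual of arm `a`, for a unit with treatment `α`, outcome `y`
and covariate `x`. The arm has propensity `e` and conditional mean outcome `m`; `r` reweights the
covariate distribution. -/
noncomputable def ipwResidual (a : 𝒜) (e m r : 𝒳 → ℝ) (α : 𝒜) (y : ℝ) (x : 𝒳) : ℝ :=
  (if α = a then 1 else 0) * (y - m x) / e x * r x

lemma ipwResidual_congr_outcome {a α : 𝒜} {y y' : ℝ} (e m r : 𝒳 → ℝ) (x : 𝒳)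
    (hy : α = a → y = y') : ipwResidual a e m r α y x = ipwResidual a e m r α y' x := by
  by_cases h : α = a <;> simp [ipwResidual, h, hy]

lemma ipwResidual_mul_ipwResidual_of_ne {a b : 𝒜} (hab : a ≠ b) (e e' m m' r r' : 𝒳 → ℝ) (α : 𝒜)
    (y y' : ℝ) (x : 𝒳) : ipwResidual a e m r α y x * ipwResidual b e' m' r' α y' x = 0 := by
  by_cases h : α = a
  · simp [ipwResidual, h, hab]
  · simp [ipwResidual, h]

variable [MeasurableSpace 𝒳] {mΩ : MeasurableSpace Ω}

lemma measurable_ipwResidual [MeasurableSpace 𝒜] [MeasurableSingletonClass 𝒜] {a : 𝒜}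
    {e m r : 𝒳 → ℝ} (he : Measurable e) (hm : Measurable m) (hr : Measurable r)
    {A : Ω → 𝒜} {Y : Ω → ℝ} {X : Ω → 𝒳} (hA : Measurable A) (hY : Measurable Y)
    (hX : Measurable X) : Measurable fun ω => ipwResidual a e m r (A ω) (Y ω) (X ω) := by
  have hind : Measurable fun ω => if A ω = a then (1 : ℝ) else 0 :=
    .ite (hA (measurableSet_singleton a)) measurable_const measurable_const
  unfold ipwResidual
  fun_prop

/-- The potential outcome `Y` of arm `a`, with propensity `e`, conditional mean `m` and conditional
variance `v` given the covariate `X`. Unconfoundedness of the treatment `A` is encoded by its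
consequences for the first two moments of the residual observed in the arm. -/
structure IsArmOutcome (Pr : Measure Ω) (X : Ω → 𝒳) (A : Ω → 𝒜) (a : 𝒜) (Y : Ω → ℝ)
    (e m v : 𝒳 → ℝ) : Prop where
  memLp : MemLp Y 2 Pr
  condExp_outcome :
    Pr[Y | MeasurableSpace.comap X inferInstance] =ᵐ[Pr] fun ω => m (X ω)
  condExp_residual :
    Pr[fun ω => (if A ω = a then (1 : ℝ) else 0) * (Y ω - m (X ω)) |
      MeasurableSpace.comap X inferInstance] =ᵐ[Pr] fun _ => 0
  condExp_residual_sq :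
    Pr[fun ω => (if A ω = a then (1 : ℝ) else 0) * (Y ω - m (X ω)) ^ 2 |
      MeasurableSpace.comap X inferInstance] =ᵐ[Pr] fun ω => e (X ω) * v (X ω)

namespace IsArmOutcome

variable {Pr : Measure Ω} {X : Ω → 𝒳} {A : Ω → 𝒜} {a : 𝒜} {Y : Ω → ℝ} {e m v r : 𝒳 → ℝ} {c : ℝ}

lemma memLp_residual (h : IsArmOutcome Pr X A a Y e m v) :
    MemLp (fun ω => Y ω - m (X ω)) 2 Pr :=
  h.memLp.sub ((memLp_congr_ae h.condExp_outcome).1 (h.memLp.condExp (by norm_num)))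

variable [MeasurableSpace 𝒜] [MeasurableSingletonClass 𝒜]

lemma memLp_ipwResidual (h : IsArmOutcome Pr X A a Y e m v) (hX : Measurable X)
    (hA : Measurable A) (he : Measurable e) (hc : 0 < c) (hce : ∀ x, c ≤ e x)
    (hr : MemLp (fun ω => r (X ω)) ⊤ Pr) :
    MemLp (fun ω => ipwResidual a e m r (A ω) (Y ω) (X ω)) 2 Pr :=
  hr.mul' (memLp_div_of_le
    (memLp_ite_one_zero_mul (hA (measurableSet_singleton a)) h.memLp_residual)
    (he.comp hX).aemeasurable hc fun ω => hce (X ω))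

lemma condExp_ipwResidual [IsFiniteMeasure Pr] (h : IsArmOutcome Pr X A a Y e m v)
    (hA : Measurable A) (he : Measurable e) (hr : Measurable r)
    (hipw : Integrable (fun ω => ipwResidual a e m r (A ω) (Y ω) (X ω)) Pr) :
    Pr[fun ω => ipwResidual a e m r (A ω) (Y ω) (X ω) | MeasurableSpace.comap X inferInstance]
      =ᵐ[Pr] 0 := by
  have hfactor : (fun ω => ipwResidual a e m r (A ω) (Y ω) (X ω)) = fun ω =>
      r (X ω) / e (X ω) * ((if A ω = a then (1 : ℝ) else 0) * (Y ω - m (X ω))) := by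
    funext ω
    simp only [ipwResidual]
    ring
  have hres := (memLp_ite_one_zero_mul (hA (measurableSet_singleton a))
    h.memLp_residual).integrable (by norm_num)
  rw [hfactor] at hipw ⊢
  refine (condExp_comp_mul_ae_eq (h := fun x => r x / e x) (g := 0) (hr.div he) hres hipw
    h.condExp_residual).trans (.of_forall fun ω => ?_)
  simp

lemma condExp_ipwResidual_sq (h : IsArmOutcome Pr X A a Y e m v)
    (hA : Measurable A) (he : Measurable e) (he0 : ∀ x, e x ≠ 0) (hr : Measurable r)
    (hipw : MemLp (fun ω => ipwResidual a e m r (A ω) (Y ω) (X ω)) 2 Pr) :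
    Pr[fun ω => ipwResidual a e m r (A ω) (Y ω) (X ω) ^ 2 | MeasurableSpace.comap X inferInstance]
      =ᵐ[Pr] fun ω => v (X ω) / e (X ω) * r (X ω) ^ 2 := by
  have hfactor : (fun ω => ipwResidual a e m r (A ω) (Y ω) (X ω) ^ 2) = fun ω =>
      (r (X ω) / e (X ω)) ^ 2 * ((if A ω = a then (1 : ℝ) else 0) * (Y ω - m (X ω)) ^ 2) := by
    funext ω
    by_cases hω : A ω = a <;> simp only [ipwResidual, hω, if_true, if_false] <;> ring
  have hres_sq := memLp_ite_one_zero_mul (hA (measurableSet_singleton a))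
    (memLp_one_iff_integrable.2 h.memLp_residual.integrable_sq)
  have hipw_sq := hipw.integrable_sq
  rw [hfactor] at hipw_sq ⊢
  refine (condExp_comp_mul_ae_eq (h := fun x => (r x / e x) ^ 2) (g := fun x => e x * v x)
    ((hr.div he).pow_const 2) (memLp_one_iff_integrable.1 hres_sq) hipw_sq
    h.condExp_residual_sq).trans (.of_forall fun ω => ?_)
  have heX := he0 (X ω)
  field_simp

end IsArmOutcome

end IPWResidual

section EfficientScore

variable {𝒳 : Type*} {w₁ μ₁ μ₀ r : 𝒳 → ℝ}

/-- The contribution of one experimental unit to the efficient influence function, as a function of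
the full data `(y₁, y₀, a, x)`; by `efficientScore_eq_of_observed` it depends on the potential
outcomes only through the observed one. Here `r` is the density ratio `q / p`. -/
noncomputable def efficientScore (w₁ μ₁ μ₀ r : 𝒳 → ℝ) (z : ℝ × ℝ × ℝ × 𝒳) : ℝ :=
  ipwResidual 1 w₁ μ₁ r z.2.2.1 z.1 z.2.2.2
    - ipwResidual 0 (fun x => 1 - w₁ x) μ₀ r z.2.2.1 z.2.1 z.2.2.2

lemma efficientScore_eq_of_observed {y y₁ y₀ a : ℝ} (w₁ μ₁ μ₀ r : 𝒳 → ℝ) (x : 𝒳)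
    (hy : y = (if a = 1 then (1 : ℝ) else 0) * y₁ + (if a = 0 then (1 : ℝ) else 0) * y₀) :
    ((if a = 1 then (1 : ℝ) else 0) * (y - μ₁ x) / w₁ x
        - (if a = 0 then (1 : ℝ) else 0) * (y - μ₀ x) / (1 - w₁ x)) * r x
      = efficientScore w₁ μ₁ μ₀ r (y₁, y₀, a, x) := by
  have hy₁ : a = 1 → y = y₁ := by rintro rfl; simpa using hy
  have hy₀ : a = 0 → y = y₀ := by rintro rfl; simpa using hy
  rw [efficientScore, ← ipwResidual_congr_outcome w₁ μ₁ r x hy₁,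
    ← ipwResidual_congr_outcome _ μ₀ r x hy₀, ipwResidual, ipwResidual, sub_mul]

lemma efficientScore_sq (w₁ μ₁ μ₀ r : 𝒳 → ℝ) (z : ℝ × ℝ × ℝ × 𝒳) :
    efficientScore w₁ μ₁ μ₀ r z ^ 2 = ipwResidual 1 w₁ μ₁ r z.2.2.1 z.1 z.2.2.2 ^ 2
      + ipwResidual 0 (fun x => 1 - w₁ x) μ₀ r z.2.2.1 z.2.1 z.2.2.2 ^ 2 := by
  rw [efficientScore, sub_sq, mul_assoc, ipwResidual_mul_ipwResidual_of_ne one_ne_zero, mul_zero,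
    sub_zero]

variable [MeasurableSpace 𝒳]

lemma measurable_efficientScore (hw₁ : Measurable w₁) (hμ₁ : Measurable μ₁) (hμ₀ : Measurable μ₀)
    (hr : Measurable r) : Measurable (efficientScore w₁ μ₁ μ₀ r) :=
  (measurable_ipwResidual hw₁ hμ₁ hr (by fun_prop) (by fun_prop) (by fun_prop)).sub
    (measurable_ipwResidual (hw₁.const_sub 1) hμ₀ hr (by fun_prop) (by fun_prop) (by fun_prop))

variable {Ω : Type*} {mΩ : MeasurableSpace Ω}

/-- A unit of the experiment: its covariate `X` has law `P`, and the two potential outcomes follow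
the arm models with propensities `w₁` and `1 - w₁`. -/
structure IsExperimentalUnit (Pr : Measure Ω) (P : Measure 𝒳) (X : Ω → 𝒳) (A Y₁ Y₀ : Ω → ℝ)
    (w₁ μ₁ μ₀ σ₁sq σ₀sq : 𝒳 → ℝ) : Prop where
  measurable_covariate : Measurable X
  measurable_treatment : Measurable A
  map_covariate : Measure.map X Pr = P
  treated : IsArmOutcome Pr X A 1 Y₁ w₁ μ₁ σ₁sq
  control : IsArmOutcome Pr X A 0 Y₀ (fun x => 1 - w₁ x) μ₀ σ₀sq

namespace IsExperimentalUnit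

variable {Pr : Measure Ω} {P : Measure 𝒳} {X : Ω → 𝒳} {A Y₁ Y₀ : Ω → ℝ} {σ₁sq σ₀sq : 𝒳 → ℝ} {c : ℝ}

lemma memLp_ipwResidual_treated (h : IsExperimentalUnit Pr P X A Y₁ Y₀ w₁ μ₁ μ₀ σ₁sq σ₀sq)
    (hw₁ : Measurable w₁) (hc : 0 < c) (hwc : ∀ x, c ≤ w₁ x) (hr : MemLp r ⊤ P) :
    MemLp (fun ω => ipwResidual 1 w₁ μ₁ r (A ω) (Y₁ ω) (X ω)) 2 Pr :=
  h.treated.memLp_ipwResidual h.measurable_covariate h.measurable_treatment hw₁ hc hwc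
    ((h.map_covariate ▸ hr).comp_of_map h.measurable_covariate.aemeasurable)

lemma memLp_ipwResidual_control (h : IsExperimentalUnit Pr P X A Y₁ Y₀ w₁ μ₁ μ₀ σ₁sq σ₀sq)
    (hw₁ : Measurable w₁) (hc : 0 < c) (hwc : ∀ x, w₁ x ≤ 1 - c) (hr : MemLp r ⊤ P) :
    MemLp (fun ω => ipwResidual 0 (fun x => 1 - w₁ x) μ₀ r (A ω) (Y₀ ω) (X ω)) 2 Pr :=
  h.control.memLp_ipwResidual h.measurable_covariate h.measurable_treatment (hw₁.const_sub 1) hc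
    (fun x => le_sub_comm.1 (hwc x))
    ((h.map_covariate ▸ hr).comp_of_map h.measurable_covariate.aemeasurable)

lemma memLp_efficientScore (h : IsExperimentalUnit Pr P X A Y₁ Y₀ w₁ μ₁ μ₀ σ₁sq σ₀sq)
    (hw₁ : Measurable w₁) (hc : 0 < c) (hwc : ∀ x, c ≤ w₁ x ∧ w₁ x ≤ 1 - c) (hr : MemLp r ⊤ P) :
    MemLp (fun ω => efficientScore w₁ μ₁ μ₀ r (Y₁ ω, Y₀ ω, A ω, X ω)) 2 Pr :=
  (h.memLp_ipwResidual_treated hw₁ hc (fun x => (hwc x).1) hr).sub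
    (h.memLp_ipwResidual_control hw₁ hc (fun x => (hwc x).2) hr)

lemma condExp_efficientScore_sq (h : IsExperimentalUnit Pr P X A Y₁ Y₀ w₁ μ₁ μ₀ σ₁sq σ₀sq)
    (hw₁ : Measurable w₁) (hc : 0 < c) (hwc : ∀ x, c ≤ w₁ x ∧ w₁ x ≤ 1 - c)
    (hrm : Measurable r) (hr : MemLp r ⊤ P) :
    Pr[fun ω => efficientScore w₁ μ₁ μ₀ r (Y₁ ω, Y₀ ω, A ω, X ω) ^ 2 |
      MeasurableSpace.comap X inferInstance] =ᵐ[Pr]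
      fun ω => (σ₁sq (X ω) / w₁ (X ω) + σ₀sq (X ω) / (1 - w₁ (X ω))) * r (X ω) ^ 2 := by
  have hL₁ := h.memLp_ipwResidual_treated hw₁ hc (fun x => (hwc x).1) hr
  have hL₀ := h.memLp_ipwResidual_control hw₁ hc (fun x => (hwc x).2) hr
  have hsq₁ := h.treated.condExp_ipwResidual_sq h.measurable_treatment hw₁
    (fun x => by linarith [hwc x]) hrm hL₁
  have hsq₀ := h.control.condExp_ipwResidual_sq h.measurable_treatment (hw₁.const_sub 1)
    (fun x => by linarith [hwc x]) hrm hL₀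
  simp only [efficientScore_sq, add_mul]
  exact (condExp_add hL₁.integrable_sq hL₀.integrable_sq _).trans (hsq₁.add hsq₀)

variable [IsFiniteMeasure Pr]

lemma condExp_efficientScore (h : IsExperimentalUnit Pr P X A Y₁ Y₀ w₁ μ₁ μ₀ σ₁sq σ₀sq)
    (hw₁ : Measurable w₁) (hc : 0 < c) (hwc : ∀ x, c ≤ w₁ x ∧ w₁ x ≤ 1 - c)
    (hrm : Measurable r) (hr : MemLp r ⊤ P) :
    Pr[fun ω => efficientScore w₁ μ₁ μ₀ r (Y₁ ω, Y₀ ω, A ω, X ω) |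
      MeasurableSpace.comap X inferInstance] =ᵐ[Pr] 0 := by
  have hipw₁ := (h.memLp_ipwResidual_treated hw₁ hc (fun x => (hwc x).1) hr).integrable one_le_two
  have hipw₀ := (h.memLp_ipwResidual_control hw₁ hc (fun x => (hwc x).2) hr).integrable one_le_two
  have hzero₁ := h.treated.condExp_ipwResidual h.measurable_treatment hw₁ hrm hipw₁
  have hzero₀ :=
    h.control.condExp_ipwResidual h.measurable_treatment (hw₁.const_sub 1) hrm hipw₀
  exact (condExp_sub hipw₁ hipw₀ _).trans
    ((hzero₁.sub hzero₀).trans (.of_eq (sub_zero 0)))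

lemma integral_efficientScore (h : IsExperimentalUnit Pr P X A Y₁ Y₀ w₁ μ₁ μ₀ σ₁sq σ₀sq)
    (hw₁ : Measurable w₁) (hc : 0 < c) (hwc : ∀ x, c ≤ w₁ x ∧ w₁ x ≤ 1 - c)
    (hrm : Measurable r) (hr : MemLp r ⊤ P) :
    ∫ ω, efficientScore w₁ μ₁ μ₀ r (Y₁ ω, Y₀ ω, A ω, X ω) ∂Pr = 0 := by
  rw [← integral_condExp h.measurable_covariate.comap_le,
    integral_congr_ae (h.condExp_efficientScore hw₁ hc hwc hrm hr)]
  exact integral_zero _ _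

lemma variance_efficientScore (h : IsExperimentalUnit Pr P X A Y₁ Y₀ w₁ μ₁ μ₀ σ₁sq σ₀sq)
    (hw₁ : Measurable w₁) (hc : 0 < c) (hwc : ∀ x, c ≤ w₁ x ∧ w₁ x ≤ 1 - c)
    (hrm : Measurable r) (hr : MemLp r ⊤ P)
    (hσ : AEStronglyMeasurable (fun x => (σ₁sq x / w₁ x + σ₀sq x / (1 - w₁ x)) * r x ^ 2) P) :
    variance (fun ω => efficientScore w₁ μ₁ μ₀ r (Y₁ ω, Y₀ ω, A ω, X ω)) Pr
      = ∫ x, (σ₁sq x / w₁ x + σ₀sq x / (1 - w₁ x)) * r x ^ 2 ∂P := by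
  have hlaw : HasLaw X P Pr := ⟨h.measurable_covariate.aemeasurable, h.map_covariate⟩
  rw [variance_of_integral_eq_zero
      (h.memLp_efficientScore hw₁ hc hwc hr).aestronglyMeasurable.aemeasurable
      (h.integral_efficientScore hw₁ hc hwc hrm hr),
    ← integral_condExp h.measurable_covariate.comap_le,
    integral_congr_ae (h.condExp_efficientScore_sq hw₁ hc hwc hrm hr)]
  exact hlaw.integral_comp hσ

end IsExperimentalUnit

end EfficientScore

/-- Mean and variance of the efficient influence function under the stratified sampling
scheme: with `T` i.i.d. experimental units `(Y_t, A_t, X_t)`, `X_t ∼ P` (density `p`),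
and `S` i.i.d. evaluation covariates `X̃_s ∼ Q` (density `q`), all jointly independent,
the influence function
`ψ = (1/T) ∑_t score_t + (1/S) ∑_s (θ₀(X̃_s) − θ₀)` has mean zero and variance
`(1/T)·E_P[(σ₁²/w₁ + σ₀²/(1−w₁))(q/p)²] + (1/S)·Var_Q(θ₀(·))`; consequently
`T·Var(ψ)` tends to the semiparametric efficiency bound
`τ(w,p) = E_Q[(σ₁²/w₁ + σ₀²/(1−w₁))(q/p)]` as `S → ∞` for fixed `T`. -/
theorem influence_function_mean_variance
    {𝒳 : Type*} [MeasurableSpace 𝒳] (μ : Measure 𝒳) [SigmaFinite μ]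
    (q p : 𝒳 → ℝ) (hqm : Measurable q) (hq0 : ∀ x, 0 ≤ q x)
    (hpm : Measurable p) (hp0 : ∀ x, 0 ≤ p x)
    (Q P : Measure 𝒳)
    (hQ : Q = μ.withDensity fun x => ENNReal.ofReal (q x))
    (hP : P = μ.withDensity fun x => ENNReal.ofReal (p x))
    [IsProbabilityMeasure Q] [IsProbabilityMeasure P]
    (hppos : ∀ᵐ x ∂μ, 0 < q x → 0 < p x)
    (M : ℝ) (hM : ∀ᵐ x ∂P, q x / p x ≤ M)
    {Ω : Type*} {mΩ : MeasurableSpace Ω} (Pr : Measure Ω) [IsProbabilityMeasure Pr]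
    (T S : ℕ) (hT : 0 < T) (hS : 0 < S)
    (X : Fin T → Ω → 𝒳) (A : Fin T → Ω → ℝ) (Y₁ Y₀ Y : Fin T → Ω → ℝ)
    (Xt : Fin S → Ω → 𝒳)
    (w₁ μ₁ μ₀ σ₁sq σ₀sq : 𝒳 → ℝ)
    (hw₁m : Measurable w₁) (hμ₁m : Measurable μ₁) (hμ₀m : Measurable μ₀)
    (hσ₁m : Measurable σ₁sq) (hσ₀m : Measurable σ₀sq)
    (c : ℝ) (hc : 0 < c) (hc2 : c < 1 / 2) (hwc : ∀ x, c ≤ w₁ x ∧ w₁ x ≤ 1 - c)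
    (hXm : ∀ t, Measurable (X t)) (hAm : ∀ t, Measurable (A t))
    (hY₁m : ∀ t, Measurable (Y₁ t)) (hY₀m : ∀ t, Measurable (Y₀ t))
    (hXtm : ∀ s, Measurable (Xt s))
    (hXlaw : ∀ t, Measure.map (X t) Pr = P)
    (hXtlaw : ∀ s, Measure.map (Xt s) Pr = Q)
    (hA01 : ∀ t ω, A t ω = 0 ∨ A t ω = 1)
    (hYdef : ∀ t ω, Y t ω = (if A t ω = 1 then (1 : ℝ) else 0) * Y₁ t ω
        + (if A t ω = 0 then (1 : ℝ) else 0) * Y₀ t ω)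
    (hY₁sq : ∀ t, MemLp (Y₁ t) 2 Pr) (hY₀sq : ∀ t, MemLp (Y₀ t) 2 Pr)
    (hcondA1 : ∀ t, Pr[(fun ω => if A t ω = 1 then (1 : ℝ) else 0) |
        MeasurableSpace.comap (X t) inferInstance] =ᵐ[Pr] fun ω => w₁ (X t ω))
    (hcondA0 : ∀ t, Pr[(fun ω => if A t ω = 0 then (1 : ℝ) else 0) |
        MeasurableSpace.comap (X t) inferInstance] =ᵐ[Pr] fun ω => 1 - w₁ (X t ω))
    (hmean1 : ∀ t, Pr[Y₁ t | MeasurableSpace.comap (X t) inferInstance]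
        =ᵐ[Pr] fun ω => μ₁ (X t ω))
    (hmean0 : ∀ t, Pr[Y₀ t | MeasurableSpace.comap (X t) inferInstance]
        =ᵐ[Pr] fun ω => μ₀ (X t ω))
    (hvar1 : ∀ t, Pr[(fun ω => (Y₁ t ω - μ₁ (X t ω)) ^ 2) |
        MeasurableSpace.comap (X t) inferInstance] =ᵐ[Pr] fun ω => σ₁sq (X t ω))
    (hvar0 : ∀ t, Pr[(fun ω => (Y₀ t ω - μ₀ (X t ω)) ^ 2) |
        MeasurableSpace.comap (X t) inferInstance] =ᵐ[Pr] fun ω => σ₀sq (X t ω))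
    (hci1m : ∀ t, Pr[(fun ω =>
          (if A t ω = 1 then (1 : ℝ) else 0) * (Y₁ t ω - μ₁ (X t ω))) |
        MeasurableSpace.comap (X t) inferInstance] =ᵐ[Pr] fun _ => (0 : ℝ))
    (hci0m : ∀ t, Pr[(fun ω =>
          (if A t ω = 0 then (1 : ℝ) else 0) * (Y₀ t ω - μ₀ (X t ω))) |
        MeasurableSpace.comap (X t) inferInstance] =ᵐ[Pr] fun _ => (0 : ℝ))
    (hci1v : ∀ t, Pr[(fun ω =>
          (if A t ω = 1 then (1 : ℝ) else 0) * (Y₁ t ω - μ₁ (X t ω)) ^ 2) |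
        MeasurableSpace.comap (X t) inferInstance] =ᵐ[Pr]
        fun ω => w₁ (X t ω) * σ₁sq (X t ω))
    (hci0v : ∀ t, Pr[(fun ω =>
          (if A t ω = 0 then (1 : ℝ) else 0) * (Y₀ t ω - μ₀ (X t ω)) ^ 2) |
        MeasurableSpace.comap (X t) inferInstance] =ᵐ[Pr]
        fun ω => (1 - w₁ (X t ω)) * σ₀sq (X t ω))
    (hindep : iIndepFun
      (β := fun i : Fin T ⊕ Fin S => Sum.elim (fun _ => ℝ × ℝ × ℝ × 𝒳) (fun _ => 𝒳) i)
      (m := fun i => Sum.rec (fun _ => (inferInstance : MeasurableSpace (ℝ × ℝ × ℝ × 𝒳)))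
        (fun _ => (inferInstance : MeasurableSpace 𝒳)) i)
      (fun i => Sum.rec (fun t ω => (Y₁ t ω, Y₀ t ω, A t ω, X t ω))
        (fun s => Xt s) i) Pr)
    (hfin : Integrable
        (fun x => (σ₁sq x / w₁ x + σ₀sq x / (1 - w₁ x)) * (q x / p x) ^ 2) P)
    (hθ : MemLp (fun x => μ₁ x - μ₀ x) 2 Q)
    (ψ : Ω → ℝ)
    (hψ : ∀ ω, ψ ω =
      (1 / (T : ℝ)) * ∑ t : Fin T,
        (((if A t ω = 1 then (1 : ℝ) else 0) * (Y t ω - μ₁ (X t ω)) / w₁ (X t ω)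
          - (if A t ω = 0 then (1 : ℝ) else 0) * (Y t ω - μ₀ (X t ω)) / (1 - w₁ (X t ω)))
          * (q (X t ω) / p (X t ω)))
      + (1 / (S : ℝ)) * ∑ s : Fin S,
          (μ₁ (Xt s ω) - μ₀ (Xt s ω) - ∫ x, (μ₁ x - μ₀ x) ∂Q)) :
    (∫ ω, ψ ω ∂Pr = 0) ∧
    (variance ψ Pr =
      (1 / (T : ℝ)) * ∫ x, (σ₁sq x / w₁ x + σ₀sq x / (1 - w₁ x)) * (q x / p x) ^ 2 ∂P
      + (1 / (S : ℝ)) * variance (fun x => μ₁ x - μ₀ x) Q) ∧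
    Filter.Tendsto
      (fun S' : ℕ => (T : ℝ) *
        ((1 / (T : ℝ)) * ∫ x, (σ₁sq x / w₁ x + σ₀sq x / (1 - w₁ x)) * (q x / p x) ^ 2 ∂P
          + (1 / (S' : ℝ)) * variance (fun x => μ₁ x - μ₀ x) Q))
      Filter.atTop
      (nhds (∫ x, (σ₁sq x / w₁ x + σ₀sq x / (1 - w₁ x)) * (q x / p x) ∂Q)) := by
  have hrm : Measurable fun x => q x / p x := hqm.div hpm
  have hr : MemLp (fun x => q x / p x) ⊤ P := memLp_top_of_bound hrm.aestronglyMeasurable M <|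
    hM.mono fun x hx => by rwa [Real.norm_of_nonneg (div_nonneg (hq0 x) (hp0 x))]
  have hunit t : IsExperimentalUnit Pr P (X t) (A t) (Y₁ t) (Y₀ t) w₁ μ₁ μ₀ σ₁sq σ₀sq :=
    ⟨hXm t, hAm t, hXlaw t, ⟨hY₁sq t, hmean1 t, hci1m t, hci1v t⟩,
      ⟨hY₀sq t, hmean0 t, hci0m t, hci0v t⟩⟩
  have hlaw s : HasLaw (Xt s) Q Pr := ⟨(hXtm s).aemeasurable, hXtlaw s⟩
  have hscore t := (hunit t).memLp_efficientScore hw₁m hc hwc hr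
  have hcentered s := memLp_comp_sub_const (hlaw s) hθ (∫ x, (μ₁ x - μ₀ x) ∂Q)
  simp only [efficientScore_eq_of_observed _ _ _ (fun x => q x / p x) _ (hYdef _ _)] at hψ
  obtain rfl : ψ = _ := funext hψ
  refine ⟨?_, ?_, ?_⟩
  · exact integral_mul_sum_add_mul_sum_eq_zero _ _
      (fun t => (hscore t).integrable one_le_two) (fun s => (hcentered s).integrable one_le_two)
      (fun t => (hunit t).integral_efficientScore hw₁m hc hwc hrm hr)
      (fun s => integral_comp_sub_integral_eq_zero (hlaw s) (hθ.integrable one_le_two))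
  · simpa only [Fintype.card_fin] using variance_average_add_average hscore hcentered
      (iIndepFun_sumElim_comp hindep (measurable_efficientScore hw₁m hμ₁m hμ₀m hrm)
        ((hμ₁m.sub hμ₀m).sub_const _))
      (fun t => (hunit t).variance_efficientScore hw₁m hc hwc hrm hr hfin.aestronglyMeasurable)
      (fun s => variance_comp_sub_const (hlaw s) hθ.aestronglyMeasurable _)
  · rw [hQ, integral_mul_div_withDensity_ofReal_eq_integral_mul_div_sq hqm hq0 hpm hp0 hppos, ← hP]
    exact tendsto_mul_one_div_mul_add_one_div_mul (Nat.cast_ne_zero.2 hT.ne') _ _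
end
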